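/- arXiv:0708.3938 — 3 statements merged into one kernel-verified Lean document; each statement's English description precedes it below -/
import Mathlib

section
/- Let X be a closed ball in ℝ³ and let a¹ and a² be two arbitrary nonzero orthogonal directions in ℝ³. Then R_c(X) is proximinal in C(X). -/
open Matrix Set Filter Topology

/-- `p 0, p 1, ..., p (m-1)` is a (finite) path whose first difference is
perpendicular to `a1`, with differences alternately perpendicular to `a1` and `a2`,
and all differences nonzero. -/
def IsPathFrom {n : ℕ} (a1 a2 : Fin n → ℝ) (m : ℕ) (p : ℕ → Fin n → ℝ) : Prop :=
  ∀ i, i + 1 < m →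
    p (i + 1) - p i ≠ 0 ∧
    (i % 2 = 0 → a1 ⬝ᵥ (p (i + 1) - p i) = 0) ∧
    (i % 2 = 1 → a2 ⬝ᵥ (p (i + 1) - p i) = 0)

/-- A finite path with respect to the directions `a1` and `a2` (the alternation may
start with either direction). -/
def IsPath {n : ℕ} (a1 a2 : Fin n → ℝ) (m : ℕ) (p : ℕ → Fin n → ℝ) : Prop :=
  IsPathFrom a1 a2 m p ∨ IsPathFrom a2 a1 m p

/-- A finite path of length `m` (i.e. with `m` points) all of whose points lie in `X`. -/
def IsPathIn {n : ℕ} (a1 a2 : Fin n → ℝ) (X : Set (Fin n → ℝ)) (m : ℕ)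
    (p : ℕ → Fin n → ℝ) : Prop :=
  1 ≤ m ∧ IsPath a1 a2 m p ∧ ∀ i < m, p i ∈ X

/-- An irreducible path in `X`: no strictly shorter path in `X` joins its endpoints. -/
def IsIrreduciblePathIn {n : ℕ} (a1 a2 : Fin n → ℝ) (X : Set (Fin n → ℝ)) (m : ℕ)
    (p : ℕ → Fin n → ℝ) : Prop :=
  IsPathIn a1 a2 X m p ∧
  ¬ ∃ l q, l < m ∧ IsPathIn a1 a2 X l q ∧ q 0 = p 0 ∧ q (l - 1) = p (m - 1)

/-- An infinite path whose first difference is perpendicular to `a1`. -/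
def IsInfPathFrom {n : ℕ} (a1 a2 : Fin n → ℝ) (p : ℕ → Fin n → ℝ) : Prop :=
  ∀ i,
    p (i + 1) - p i ≠ 0 ∧
    (i % 2 = 0 → a1 ⬝ᵥ (p (i + 1) - p i) = 0) ∧
    (i % 2 = 1 → a2 ⬝ᵥ (p (i + 1) - p i) = 0)

/-- An infinite path with respect to the directions `a1` and `a2`. -/
def IsInfPath {n : ℕ} (a1 a2 : Fin n → ℝ) (p : ℕ → Fin n → ℝ) : Prop :=
  IsInfPathFrom a1 a2 p ∨ IsInfPathFrom a2 a1 p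

/-- `f` is bounded on `X`. -/
def BddOn {n : ℕ} (f : (Fin n → ℝ) → ℝ) (X : Set (Fin n → ℝ)) : Prop :=
  ∃ M, ∀ x ∈ X, |f x| ≤ M

/-- `R_a(X)`: sums of two ridge functions with directions `a1, a2` that are bounded on `X`
(the individual summands need not be bounded). -/
def RaSet {n : ℕ} (a1 a2 : Fin n → ℝ) (X : Set (Fin n → ℝ)) : Set ((Fin n → ℝ) → ℝ) :=
  {f | (∃ g1 g2 : ℝ → ℝ, ∀ x ∈ X, f x = g1 (a1 ⬝ᵥ x) + g2 (a2 ⬝ᵥ x)) ∧ BddOn f X}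

/-- `R_b(X)`: sums of two ridge functions with directions `a1, a2` whose summands are
bounded on `X`. -/
def RbSet {n : ℕ} (a1 a2 : Fin n → ℝ) (X : Set (Fin n → ℝ)) : Set ((Fin n → ℝ) → ℝ) :=
  {f | ∃ g1 g2 : ℝ → ℝ, (∀ x ∈ X, f x = g1 (a1 ⬝ᵥ x) + g2 (a2 ⬝ᵥ x)) ∧
    BddOn (fun x => g1 (a1 ⬝ᵥ x)) X ∧ BddOn (fun x => g2 (a2 ⬝ᵥ x)) X}

/-- `R_c(X)`: sums of two ridge functions with directions `a1, a2` whose summands are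
continuous on `X`. -/
def RcSet {n : ℕ} (a1 a2 : Fin n → ℝ) (X : Set (Fin n → ℝ)) : Set ((Fin n → ℝ) → ℝ) :=
  {f | ∃ g1 g2 : ℝ → ℝ, (∀ x ∈ X, f x = g1 (a1 ⬝ᵥ x) + g2 (a2 ⬝ᵥ x)) ∧
    ContinuousOn (fun x => g1 (a1 ⬝ᵥ x)) X ∧ ContinuousOn (fun x => g2 (a2 ⬝ᵥ x)) X}

/-- The uniform (sup) distance of `f` and `g` over `X`. -/
noncomputable def supDist {n : ℕ} (X : Set (Fin n → ℝ)) (f g : (Fin n → ℝ) → ℝ) : ℝ :=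
  sSup {r | ∃ x ∈ X, r = |f x - g x|}

/-- `f` has an extremal element (best approximation in the sup norm over `X`) in `S`. -/
def HasExtremalIn {n : ℕ} (X : Set (Fin n → ℝ)) (f : (Fin n → ℝ) → ℝ)
    (S : Set ((Fin n → ℝ) → ℝ)) : Prop :=
  ∃ g0 ∈ S, supDist X f g0 = sInf ((supDist X f) '' S)

/-- The orbit of `t`: all points of `X` joined to `t` by a common path lying in `X`. -/
def Orbit {n : ℕ} (a1 a2 : Fin n → ℝ) (X : Set (Fin n → ℝ)) (t : Fin n → ℝ) :
    Set (Fin n → ℝ) :=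
  {y | ∃ m p, IsPathIn a1 a2 X m p ∧ (∃ i < m, p i = t) ∧ (∃ j < m, p j = y)}

/-- The variation of `f` on a set `Y`. -/
noncomputable def varOn {n : ℕ} (f : (Fin n → ℝ) → ℝ) (Y : Set (Fin n → ℝ)) : ℝ :=
  sSup {r | ∃ x ∈ Y, ∃ y ∈ Y, r = |f x - f y|}

/-!
Minimising sequences of ridge sums can be normalised to be uniformly bounded, because the ball
can be projected onto a hyperplane through its centre orthogonal to one direction without changing
the other coordinate. Pointwise limits along an ultrafilter then give a best approximation by a
possibly discontinuous ridge sum `g (π x) + h (ρ x)`.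

The summands are made continuous one at a time, without increasing the error `E`. With `h` fixed,
the admissible `g` are those with `f x - h (ρ x) - E ≤ g (π x) ≤ f x - h (ρ x) + E`. Of two points
of the ball, the one farther from the central hyperplane can be moved to the level of the other
inside the ball, so the lower bound at one point exceeds the upper bound at another by at most a
modulus of continuity of `f`; a sup-convolution of the lower bound with this modulus is a continuous
`g` between the two bounds.
-/

section ContinuousSelection

variable {α P : Type*}

lemma continuous_iSup_of_equicontinuous [TopologicalSpace P] {F : α → P → ℝ}
    (hF : Equicontinuous F) (hbdd : ∀ p, BddAbove (range fun x => F x p)) :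
    Continuous fun p => ⨆ x, F x p := by
  rcases isEmpty_or_nonempty α with _ | _
  · simp only [Real.iSup_of_isEmpty, continuous_const]
  rw [continuous_iff_continuousAt]
  intro p₀
  rw [ContinuousAt, Metric.tendsto_nhds]
  intro ε hε
  filter_upwards [Metric.equicontinuousAt_iff_right.1 (hF p₀) (ε / 2) (half_pos hε)] with p hp
  have hclose : ∀ x, |F x p₀ - F x p| < ε / 2 := hp
  have hle : ⨆ x, F x p ≤ (⨆ x, F x p₀) + ε / 2 := ciSup_le fun x => by
    linarith [le_ciSup (hbdd p₀) x, (abs_lt.1 (hclose x)).1]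
  have hge : ⨆ x, F x p₀ ≤ (⨆ x, F x p) + ε / 2 := ciSup_le fun x => by
    linarith [le_ciSup (hbdd p) x, (abs_lt.1 (hclose x)).2]
  rw [Real.dist_eq, abs_lt]
  constructor <;> linarith

lemma equicontinuous_const_sub_of_compactSpace [TopologicalSpace α] [CompactSpace α]
    [TopologicalSpace P] {K : α → P → ℝ} (hK : Continuous (Function.uncurry K)) (L : α → ℝ) :
    Equicontinuous fun x p => L x - K x p := by
  intro p₀
  rw [Metric.equicontinuousAt_iff_right]
  intro ε hε
  have hclose : ∀ᶠ p in 𝓝 p₀, ∀ x ∈ (univ : Set α), |K x p₀ - K x p| < ε := by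
    refine isCompact_univ.eventually_forall_of_forall_eventually fun x _ => ?_
    have hcont : Continuous fun z : P × α => |K z.2 p₀ - K z.2 z.1| := by fun_prop
    exact hcont.continuousAt.eventually_lt_const (by simpa using hε)
  filter_upwards [hclose] with p hp x
  rw [dist_sub_left]
  exact hp x (mem_univ x)

lemma exists_continuous_comp_between [TopologicalSpace α] [CompactSpace α] [TopologicalSpace P]
    {π : α → P} (hπ : Continuous π) {W : P → P → ℝ} (hW : Continuous (Function.uncurry W))
    (hW_self : ∀ p, W p p = 0) {L U : α → ℝ} (hLU : ∀ x y, L x ≤ U y + W (π x) (π y)) :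
    ∃ g : P → ℝ, Continuous (g ∘ π) ∧ ∀ x, L x ≤ g (π x) ∧ g (π x) ≤ U x := by
  have hle : ∀ x y, L x - W (π x) (π y) ≤ U y := fun x y => sub_le_iff_le_add.2 (hLU x y)
  have hbdd : ∀ y, BddAbove (range fun x => L x - W (π x) (π y)) := fun y =>
    ⟨U y, forall_mem_range.2 fun x => hle x y⟩
  refine ⟨fun p => ⨆ x, (L x - W (π x) p), ?_, fun y => ⟨?_, ?_⟩⟩
  · exact continuous_iSup_of_equicontinuous
      (equicontinuous_const_sub_of_compactSpace (K := fun x y => W (π x) (π y)) (by fun_prop) L)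
      hbdd
  · simpa only [hW_self, sub_zero] using le_ciSup (hbdd y) y
  · have : Nonempty α := ⟨y⟩
    exact ciSup_le fun x => hle x y

end ContinuousSelection

section RidgeSums

variable {α P Q : Type*} {π : α → P} {ρ : α → Q} {f : α → ℝ}

/-- An exchange kernel measures the cost, in terms of `f`, of equalising the `π`-values of two
points by moving one of them (whichever can be moved) along a fibre of `ρ`. Continuity and
vanishing on the diagonal make it a substitute for a modulus of continuity. -/
structure IsExchangeKernel [TopologicalSpace P] (π : α → P) (ρ : α → Q) (f : α → ℝ)
    (W : P → P → ℝ) : Prop where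
  continuous : Continuous (Function.uncurry W)
  self : ∀ p, W p p = 0
  exchange : ∀ x y,
    (∃ x', π x' = π y ∧ ρ x' = ρ x ∧ |f x' - f x| ≤ W (π x) (π y)) ∨
    (∃ y', π y' = π x ∧ ρ y' = ρ y ∧ |f y' - f y| ≤ W (π x) (π y))

lemma IsExchangeKernel.exists_continuous_summand [TopologicalSpace α] [CompactSpace α]
    [TopologicalSpace P] {W : P → P → ℝ} (hW : IsExchangeKernel π ρ f W) (hπ : Continuous π)
    {E : ℝ} {g : P → ℝ} {h : Q → ℝ} (hE : ∀ x, |f x - (g (π x) + h (ρ x))| ≤ E) :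
    ∃ g' : P → ℝ, Continuous (g' ∘ π) ∧ ∀ x, |f x - (g' (π x) + h (ρ x))| ≤ E := by
  have hbounds : ∀ x y,
      f x - h (ρ x) - E ≤ f y - h (ρ y) + E + W (π x) (π y) := by
    intro x y
    have hx := abs_le.1 (hE x)
    have hy := abs_le.1 (hE y)
    rcases hW.exchange x y with ⟨x', hπx', hρx', hfx'⟩ | ⟨y', hπy', hρy', hfy'⟩
    · have hx' := abs_le.1 (hE x')
      rw [hπx', hρx'] at hx'
      linarith [hx'.2, hy.1, (abs_le.1 hfx').1]
    · have hy' := abs_le.1 (hE y')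
      rw [hπy', hρy'] at hy'
      linarith [hy'.1, hx.2, (abs_le.1 hfy').2]
  obtain ⟨g', hg'_cont, hg'⟩ :=
    exists_continuous_comp_between hπ hW.continuous hW.self hbounds
  refine ⟨g', hg'_cont, fun x => abs_le.2 ?_⟩
  constructor <;> linarith [(hg' x).1, (hg' x).2]

/-- Shifting a constant from `h` to `g` makes `h` vanish at `q₀`; then `g` is read off from the sum
on the fibre of `ρ` over `q₀`. -/
lemma exists_bounded_summands {B : ℝ} {q₀ : Q}
    (hproj : ∀ x, ∃ x', π x' = π x ∧ ρ x' = q₀) {g : P → ℝ} {h : Q → ℝ}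
    (hB : ∀ x, |g (π x) + h (ρ x)| ≤ B) :
    ∃ (g' : P → ℝ) (h' : Q → ℝ), (∀ x, g' (π x) + h' (ρ x) = g (π x) + h (ρ x)) ∧
      (∀ x, |g' (π x)| ≤ B) ∧ ∀ x, |h' (ρ x)| ≤ 2 * B := by
  have hg' : ∀ x, |g (π x) + h q₀| ≤ B := by
    intro x
    obtain ⟨x', hπx', hρx'⟩ := hproj x
    simpa only [hπx', hρx'] using hB x'
  refine ⟨fun p => g p + h q₀, fun q => h q - h q₀, fun x => by ring, hg', fun x => ?_⟩
  calc |h (ρ x) - h q₀| = |(g (π x) + h (ρ x)) - (g (π x) + h q₀)| := by congr 1; ring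
    _ ≤ |g (π x) + h (ρ x)| + |g (π x) + h q₀| := abs_sub _ _
    _ ≤ 2 * B := by linarith [hB x, hg' x]

lemma exists_forall_tendsto_of_bounded {ι : Type*} (l : Ultrafilter ι) {s : Set P} {B : ℝ}
    {u : ι → P → ℝ} (hu : ∀ i, ∀ p ∈ s, |u i p| ≤ B) :
    ∃ v : P → ℝ, ∀ p ∈ s, Tendsto (fun i => u i p) l (𝓝 (v p)) := by
  refine ⟨fun p => limUnder l fun i => u i p, fun p hp => tendsto_nhds_limUnder ?_⟩
  have hmem : Icc (-B) B ∈ l.map fun i => u i p :=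
    Filter.univ_mem' (f := (l : Filter ι)) fun i => abs_le.1 (hu i p hp)
  obtain ⟨v, -, hv⟩ := isCompact_Icc.ultrafilter_le_nhds' _ hmem
  exact ⟨v, hv⟩

lemma exists_summands_abs_sub_le {C E : ℝ} {q₀ : Q} (hf : ∀ x, |f x| ≤ C)
    (hproj : ∀ x, ∃ x', π x' = π x ∧ ρ x' = q₀)
    (happrox : ∀ ε > 0, ∃ (g : P → ℝ) (h : Q → ℝ), ∀ x, |f x - (g (π x) + h (ρ x))| ≤ E + ε) :
    ∃ (g : P → ℝ) (h : Q → ℝ), ∀ x, |f x - (g (π x) + h (ρ x))| ≤ E := by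
  have hseq : ∀ n : ℕ, ∃ (g : P → ℝ) (h : Q → ℝ),
      (∀ x, |f x - (g (π x) + h (ρ x))| ≤ E + 1 / (n + 1)) ∧
      (∀ x, |g (π x)| ≤ C + (E + 1)) ∧ ∀ x, |h (ρ x)| ≤ 2 * (C + (E + 1)) := by
    intro n
    obtain ⟨g, h, hgh⟩ := happrox (1 / (n + 1)) Nat.one_div_pos_of_nat
    have hsum : ∀ x, |g (π x) + h (ρ x)| ≤ C + (E + 1) := fun x =>
      calc |g (π x) + h (ρ x)| = |f x - (f x - (g (π x) + h (ρ x)))| := by rw [sub_sub_cancel]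
        _ ≤ |f x| + |f x - (g (π x) + h (ρ x))| := abs_sub _ _
        _ ≤ C + (E + 1 / (n + 1)) := add_le_add (hf x) (hgh x)
        _ ≤ C + (E + 1) := by
          gcongr
          simpa using Nat.one_div_le_one_div (α := ℝ) (Nat.zero_le n)
    obtain ⟨g', h', hsum', hg', hh'⟩ := exists_bounded_summands hproj hsum
    exact ⟨g', h', fun x => by rw [hsum']; exact hgh x, hg', hh'⟩
  choose G H hGH hG hH using hseq
  obtain ⟨g, hg⟩ := exists_forall_tendsto_of_bounded (hyperfilter ℕ) (s := range π)
    fun n => forall_mem_range.2 (hG n)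
  obtain ⟨h, hh⟩ := exists_forall_tendsto_of_bounded (hyperfilter ℕ) (s := range ρ)
    fun n => forall_mem_range.2 (hH n)
  refine ⟨g, h, fun x => ?_⟩
  have herr := (((hg _ (mem_range_self x)).add (hh _ (mem_range_self x))).const_sub (f x)).abs
  have hbound : Tendsto (fun n : ℕ => E + 1 / ((n : ℝ) + 1)) (hyperfilter ℕ) (𝓝 E) := by
    simpa only [add_zero] using
      (tendsto_one_div_add_atTop_nhds_zero_nat.const_add E).mono_left Nat.hyperfilter_le_atTop
  exact le_of_tendsto_of_tendsto' herr hbound fun n => hGH n x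

theorem exists_continuous_summands_abs_sub_le [TopologicalSpace α] [CompactSpace α]
    [TopologicalSpace P] [TopologicalSpace Q] (hπ : Continuous π) (hρ : Continuous ρ)
    (hf : Continuous f) {V : P → P → ℝ} (hV : IsExchangeKernel π ρ f V)
    {W : Q → Q → ℝ} (hW : IsExchangeKernel ρ π f W) {q₀ : Q}
    (hproj : ∀ x, ∃ x', π x' = π x ∧ ρ x' = q₀) {E : ℝ}
    (happrox : ∀ ε > 0, ∃ (g : P → ℝ) (h : Q → ℝ), ∀ x, |f x - (g (π x) + h (ρ x))| ≤ E + ε) :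
    ∃ (g : P → ℝ) (h : Q → ℝ), Continuous (g ∘ π) ∧ Continuous (h ∘ ρ) ∧
      ∀ x, |f x - (g (π x) + h (ρ x))| ≤ E := by
  obtain ⟨C, hC⟩ := isCompact_univ.exists_bound_of_continuousOn hf.continuousOn
  obtain ⟨g₀, h₀, hgh₀⟩ :=
    exists_summands_abs_sub_le (fun x => hC x (mem_univ x)) hproj happrox
  obtain ⟨g, hg_cont, hg⟩ := hV.exists_continuous_summand hπ hgh₀
  obtain ⟨h, hh_cont, hh⟩ :=
    hW.exists_continuous_summand hρ (g := h₀) (h := g) (by simpa only [add_comm] using hg)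
  exact ⟨g, h, hg_cont, hh_cont, by simpa only [add_comm] using hh⟩

end RidgeSums

section SupDist

variable {n : ℕ} {X : Set (Fin n → ℝ)} {f g : (Fin n → ℝ) → ℝ}

lemma supDist_nonneg : 0 ≤ supDist X f g :=
  Real.sSup_nonneg (by rintro _ ⟨x, -, rfl⟩; exact abs_nonneg _)

lemma supDist_le {E : ℝ} (hE : 0 ≤ E) (h : ∀ x ∈ X, |f x - g x| ≤ E) : supDist X f g ≤ E :=
  Real.sSup_le (by rintro _ ⟨x, hx, rfl⟩; exact h x hx) hE

lemma abs_sub_le_supDist (hX : IsCompact X) (hf : ContinuousOn f X) (hg : ContinuousOn g X)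
    {x : Fin n → ℝ} (hx : x ∈ X) : |f x - g x| ≤ supDist X f g := by
  obtain ⟨C, hC⟩ := hX.exists_bound_of_continuousOn (hf.sub hg)
  refine le_csSup ⟨C, ?_⟩ ⟨x, hx, rfl⟩
  rintro _ ⟨y, hy, rfl⟩
  exact hC y hy

lemma hasExtremalIn_of_forall_abs_sub_le {S : Set ((Fin n → ℝ) → ℝ)} (hg : g ∈ S)
    (h : ∀ x ∈ X, |f x - g x| ≤ sInf (supDist X f '' S)) : HasExtremalIn X f S := by
  have hnonneg : ∀ d ∈ supDist X f '' S, 0 ≤ d := forall_mem_image.2 fun _ _ => supDist_nonneg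
  exact ⟨g, hg, (supDist_le (Real.sInf_nonneg hnonneg) h).antisymm
    (csInf_le ⟨0, hnonneg⟩ (mem_image_of_mem _ hg))⟩

lemma zero_mem_RcSet (a1 a2 : Fin n → ℝ) (X : Set (Fin n → ℝ)) : 0 ∈ RcSet a1 a2 X :=
  ⟨0, 0, by simp, continuousOn_const, continuousOn_const⟩

lemma exists_ridge_sum_abs_sub_le (hX : IsCompact X) (hf : ContinuousOn f X)
    (a1 a2 : Fin n → ℝ) {ε : ℝ} (hε : 0 < ε) :
    ∃ g1 g2 : ℝ → ℝ, ∀ x ∈ X,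
      |f x - (g1 (a1 ⬝ᵥ x) + g2 (a2 ⬝ᵥ x))| ≤ sInf (supDist X f '' RcSet a1 a2 X) + ε := by
  obtain ⟨_, ⟨g, ⟨g1, g2, hg, hg1, hg2⟩, rfl⟩, hlt⟩ := exists_lt_of_csInf_lt
    (Set.Nonempty.image _ ⟨0, zero_mem_RcSet a1 a2 X⟩) (lt_add_of_pos_right _ hε)
  refine ⟨g1, g2, fun x hx => ?_⟩
  rw [← hg x hx]
  exact (abs_sub_le_supDist hX hf ((hg1.add hg2).congr hg) hx).trans hlt.le

end SupDist

lemma exists_continuous_modulus {E : Type*} [AddCommGroup E] [TopologicalSpace E]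
    [ContinuousAdd E] [T4Space E] {X : Set E} (hX : IsCompact X) {f : E → ℝ}
    (hf : ContinuousOn f X) :
    ∃ ω : E → ℝ, Continuous ω ∧ ω 0 = 0 ∧ ∀ x ∈ X, ∀ y ∈ X, |f y - f x| ≤ ω (y - x) := by
  obtain ⟨F, hF⟩ := ContinuousMap.exists_restrict_eq hX.isClosed ⟨X.domRestrict f, hf.domRestrict⟩
  have hFf : ∀ x ∈ X, F x = f x := fun x hx => DFunLike.congr_fun hF ⟨x, hx⟩
  refine ⟨fun v => sSup ((fun x => |F (x + v) - F x|) '' X), ?_, ?_, fun x hx y hy => ?_⟩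
  · exact hX.continuous_sSup (f := fun v x => |F (x + v) - F x|) (by fun_prop)
  · rcases X.eq_empty_or_nonempty with rfl | hne
    · simp
    · simp [hne.image_const]
  · refine le_csSup (hX.bddAbove_image (by fun_prop)) ⟨x, hx, ?_⟩
    simp only [add_sub_cancel, hFf x hx, hFf y hy]

section SteinerSymmetric

variable {ι : Type*} [Fintype ι] {a b x : ι → ℝ} {m q : ℝ} {X : Set (ι → ℝ)}

/-- The orthogonal projection of `x` onto the hyperplane `{y | a ⬝ᵥ y = q}`. For `a = 0` it is `x`,
by the convention `t / 0 = 0`. -/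
noncomputable def hyperplaneProj (a : ι → ℝ) (q : ℝ) (x : ι → ℝ) : ι → ℝ :=
  x + ((q - a ⬝ᵥ x) / (a ⬝ᵥ a)) • a

lemma dotProduct_hyperplaneProj_self (ha : a ≠ 0) : a ⬝ᵥ hyperplaneProj a q x = q := by
  rw [hyperplaneProj, dotProduct_add, dotProduct_smul, smul_eq_mul,
    div_mul_cancel₀ _ (dotProduct_self_eq_zero.not.2 ha), add_sub_cancel]

lemma dotProduct_hyperplaneProj_of_orthogonal (hba : b ⬝ᵥ a = 0) :
    b ⬝ᵥ hyperplaneProj a q x = b ⬝ᵥ x := by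
  rw [hyperplaneProj, dotProduct_add, dotProduct_smul, hba, smul_zero, add_zero]

lemma hyperplaneProj_sub (a : ι → ℝ) (q : ℝ) (x : ι → ℝ) :
    hyperplaneProj a q x - x = ((q - a ⬝ᵥ x) / (a ⬝ᵥ a)) • a :=
  add_sub_cancel_left _ _

/-- Steiner symmetry of `X` about the hyperplane `{y | a ⬝ᵥ y = m}`: every line parallel to `a`
meets `X` in a (possibly empty or unbounded) interval centred on that hyperplane. It is encoded as:
each point of `X` can be moved along `a` to any level `q` at most as far from `m` as its own. -/
def IsSteinerSymmetric (a : ι → ℝ) (m : ℝ) (X : Set (ι → ℝ)) : Prop :=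
  ∀ x ∈ X, ∀ q, |q - m| ≤ |a ⬝ᵥ x - m| → hyperplaneProj a q x ∈ X

lemma IsSteinerSymmetric.exists_isExchangeKernel (hsymm : IsSteinerSymmetric a m X) (ha : a ≠ 0)
    (hba : b ⬝ᵥ a = 0) (hX : IsCompact X) {f : (ι → ℝ) → ℝ} (hf : ContinuousOn f X) :
    ∃ W, IsExchangeKernel (fun x : X => a ⬝ᵥ x) (fun x : X => b ⬝ᵥ x) (X.domRestrict f) W := by
  obtain ⟨ω, hω_cont, hω_zero, hω⟩ := exists_continuous_modulus hX hf
  refine ⟨fun s t => ω (((t - s) / (a ⬝ᵥ a)) • a), by fun_prop, by simp [hω_zero], ?_⟩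
  rintro ⟨x, hx⟩ ⟨y, hy⟩
  rcases le_total |a ⬝ᵥ y - m| |a ⬝ᵥ x - m| with h | h
  · have hx' := hsymm x hx _ h
    refine .inl ⟨⟨_, hx'⟩, dotProduct_hyperplaneProj_self ha,
      dotProduct_hyperplaneProj_of_orthogonal hba, ?_⟩
    calc |f (hyperplaneProj a (a ⬝ᵥ y) x) - f x|
        ≤ ω (hyperplaneProj a (a ⬝ᵥ y) x - x) := hω x hx _ hx'
      _ = ω (((a ⬝ᵥ y - a ⬝ᵥ x) / (a ⬝ᵥ a)) • a) := by rw [hyperplaneProj_sub]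
  · have hy' := hsymm y hy _ h
    refine .inr ⟨⟨_, hy'⟩, dotProduct_hyperplaneProj_self ha,
      dotProduct_hyperplaneProj_of_orthogonal hba, ?_⟩
    have hdiff : y - hyperplaneProj a (a ⬝ᵥ x) y = ((a ⬝ᵥ y - a ⬝ᵥ x) / (a ⬝ᵥ a)) • a := by
      rw [← neg_sub, hyperplaneProj_sub, ← neg_smul, ← neg_div, neg_sub]
    calc |f (hyperplaneProj a (a ⬝ᵥ x) y) - f y|
        = |f y - f (hyperplaneProj a (a ⬝ᵥ x) y)| := abs_sub_comm _ _
      _ ≤ ω (y - hyperplaneProj a (a ⬝ᵥ x) y) := hω _ hy' y hy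
      _ = ω (((a ⬝ᵥ y - a ⬝ᵥ x) / (a ⬝ᵥ a)) • a) := by rw [hdiff]

lemma isCompact_setOf_sum_sq_le (c : ι → ℝ) (R : ℝ) :
    IsCompact {x : ι → ℝ | ∑ i, (x i - c i) ^ 2 ≤ R} := by
  have hbox : IsCompact (univ.pi fun i => Icc (c i - √R) (c i + √R)) :=
    isCompact_univ_pi fun _ => isCompact_Icc
  refine hbox.of_isClosed_subset (isClosed_le (by fun_prop) continuous_const) fun x hx i _ => ?_
  have hi : (x i - c i) ^ 2 ≤ R :=
    (Finset.single_le_sum (fun j _ => sq_nonneg (x j - c j)) (Finset.mem_univ i)).trans hx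
  have := abs_le.1 (Real.abs_le_sqrt hi)
  constructor <;> linarith

lemma sum_sq_hyperplaneProj_sub (ha : a ≠ 0) (c x : ι → ℝ) (q : ℝ) :
    ∑ i, (hyperplaneProj a q x i - c i) ^ 2 =
      ∑ i, (x i - c i) ^ 2 + ((q - a ⬝ᵥ c) ^ 2 - (a ⬝ᵥ x - a ⬝ᵥ c) ^ 2) / (a ⬝ᵥ a) := by
  have haa : a ⬝ᵥ a ≠ 0 := dotProduct_self_eq_zero.not.2 ha
  have hsq : ∀ y : ι → ℝ, ∑ i, (y i - c i) ^ 2 = (y - c) ⬝ᵥ (y - c) := fun y => by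
    simp only [dotProduct, Pi.sub_apply, sq]
  rw [hsq, hsq, hyperplaneProj, add_sub_right_comm]
  simp only [add_dotProduct, dotProduct_add, smul_dotProduct, dotProduct_smul, smul_eq_mul,
    dotProduct_comm (x - c) a, dotProduct_sub a]
  field_simp
  ring

lemma isSteinerSymmetric_setOf_sum_sq_le (ha : a ≠ 0) (c : ι → ℝ) (R : ℝ) :
    IsSteinerSymmetric a (a ⬝ᵥ c) {x | ∑ i, (x i - c i) ^ 2 ≤ R} := by
  intro x hx q hq
  have hnonpos : ((q - a ⬝ᵥ c) ^ 2 - (a ⬝ᵥ x - a ⬝ᵥ c) ^ 2) / (a ⬝ᵥ a) ≤ 0 :=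
    div_nonpos_of_nonpos_of_nonneg (sub_nonpos.2 (sq_le_sq.2 hq))
      (by simpa using dotProduct_self_star_nonneg a)
  rw [mem_ofPred_eq, sum_sq_hyperplaneProj_sub ha]
  exact (add_le_of_nonpos_right hnonpos).trans hx

end SteinerSymmetric

theorem proximinality_of_Rc_on_closed_ball_general {n : ℕ} {a1 a2 : Fin n → ℝ} (ha1 : a1 ≠ 0)
    (ha2 : a2 ≠ 0) (horth : a1 ⬝ᵥ a2 = 0) {X : Set (Fin n → ℝ)} (hX : IsCompact X) {m1 m2 : ℝ}
    (hsymm1 : IsSteinerSymmetric a1 m1 X) (hsymm2 : IsSteinerSymmetric a2 m2 X)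
    {f : (Fin n → ℝ) → ℝ} (hf : ContinuousOn f X) :
    HasExtremalIn X f (RcSet a1 a2 X) := by
  have : CompactSpace X := isCompact_iff_compactSpace.1 hX
  obtain ⟨V, hV⟩ := hsymm1.exists_isExchangeKernel ha1 (dotProduct_comm a2 a1 ▸ horth) hX hf
  obtain ⟨W, hW⟩ := hsymm2.exists_isExchangeKernel ha2 horth hX hf
  have hproj : ∀ x : X, ∃ x' : X, a1 ⬝ᵥ x' = a1 ⬝ᵥ x ∧ a2 ⬝ᵥ x' = m2 := fun x =>
    ⟨⟨_, hsymm2 x x.2 m2 (by simp)⟩, dotProduct_hyperplaneProj_of_orthogonal horth,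
      dotProduct_hyperplaneProj_self ha2⟩
  obtain ⟨g1, g2, hg1, hg2, hg⟩ := exists_continuous_summands_abs_sub_le (by fun_prop)
    (by fun_prop) hf.domRestrict hV hW hproj fun ε hε =>
      (exists_ridge_sum_abs_sub_le hX hf a1 a2 hε).imp fun _ ⟨g2, hg⟩ => ⟨g2, fun x => hg x x.2⟩
  exact hasExtremalIn_of_forall_abs_sub_le
    (g := fun x => g1 (a1 ⬝ᵥ x) + g2 (a2 ⬝ᵥ x))
    ⟨g1, g2, fun _ _ => rfl, continuousOn_iff_continuous_domRestrict.2 hg1,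
      continuousOn_iff_continuous_domRestrict.2 hg2⟩ fun x hx => hg ⟨x, hx⟩

/-- Example (a): if `X` is a closed (Euclidean) ball in `ℝ³` and
`a¹, a²` are two arbitrary nonzero orthogonal directions, then `R_c(X)` is proximinal
in `C(X)`. -/
theorem proximinality_of_Rc_on_closed_ball
    (center : Fin 3 → ℝ) (r : ℝ) (hr : 0 < r)
    (a1 a2 : Fin 3 → ℝ) (ha1 : a1 ≠ 0) (ha2 : a2 ≠ 0) (horth : a1 ⬝ᵥ a2 = 0)
    (X : Set (Fin 3 → ℝ)) (hXball : X = {x | ∑ i, (x i - center i) ^ 2 ≤ r ^ 2})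
    (f : (Fin 3 → ℝ) → ℝ) (hf : ContinuousOn f X) :
    HasExtremalIn X f (RcSet a1 a2 X) := by
  subst hXball
  exact proximinality_of_Rc_on_closed_ball_general ha1 ha2 horth (isCompact_setOf_sum_sq_le _ _)
    (isSteinerSymmetric_setOf_sum_sq_le ha1 _ _) (isSteinerSymmetric_setOf_sum_sq_le ha2 _ _) hf
end

section
/- Let X ⊂ ℝⁿ be compact and let a¹, a² be linearly independent directions. Suppose R_c(X) is proximinal in C(X). Then there exists a positive real number c such that sup_{t∈X} var_{O(t)} f ≤ c · sup_{t∈X} var_{{x∈X : a²·x = a²·t}} f for every f ∈ R_c¹, i.e. for every continuous function f on X of the form f(x) = g(a¹·x) with g : ℝ → ℝ. -/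
open Matrix Set Filter Topology

/-!
Write `πᵢ` for `x ↦ aⁱ ⬝ᵥ x`. Proximinality makes the space of sums `u₁ ∘ π₁ + u₂ ∘ π₂` closed, so
by the open mapping theorem every such sum has a representation whose summands are bounded by a
fixed multiple `C` of the norm of the sum. If `g ∘ π₁` oscillates by less than `r` on the fibres of
`π₂`, a partition of unity gives `h` with `‖g ∘ π₁ - h ∘ π₂‖ ≤ r`; represent this difference as
`u₁ ∘ π₁ + u₂ ∘ π₂` with `‖u₁‖ ≤ C r`. Then `(g - u₁) ∘ π₁ = (h + u₂) ∘ π₂` is constant on the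
fibres of both projections, hence on the classes of `Setoid.ker π₁ ⊔ Setoid.ker π₂` and on the
orbits they contain, where `g ∘ π₁` therefore oscillates no more than `u₁ ∘ π₁`.
-/

theorem isClosed_of_forall_exists_dist_eq_infDist {M : Type*} [MetricSpace M] {s : Set M}
    (hs : ∀ x, ∃ y ∈ s, dist x y = Metric.infDist x s) : IsClosed s := by
  refine isClosed_of_closure_subset fun x hx ↦ ?_
  obtain ⟨y, hys, hxy⟩ := hs x
  rw [Metric.infDist_zero_of_mem_closure hx, dist_eq_zero] at hxy
  exact hxy ▸ hys

theorem exists_preimage_norm_le_of_isClosed_range {𝕜 E F : Type*} [NontriviallyNormedField 𝕜]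
    [NormedAddCommGroup E] [NormedSpace 𝕜 E] [CompleteSpace E]
    [NormedAddCommGroup F] [NormedSpace 𝕜 F] [CompleteSpace F]
    (T : E →L[𝕜] F) (hT : IsClosed (range T)) :
    ∃ C > 0, ∀ y ∈ range T, ∃ x, T x = y ∧ ‖x‖ ≤ C * ‖y‖ := by
  have : CompleteSpace T.range := IsClosed.completeSpace_coe (hs := hT)
  obtain ⟨C, hC, hpre⟩ := T.rangeRestrict.exists_preimage_norm_le rangeFactorization_surjective
  refine ⟨C, hC, fun y hy ↦ ?_⟩
  obtain ⟨x, hxy, hx⟩ := hpre ⟨y, hy⟩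
  exact ⟨x, congrArg Subtype.val hxy, hx⟩

section Fibres

variable {X Y Y₁ Y₂ E : Type*} [TopologicalSpace X] [TopologicalSpace Y] [TopologicalSpace Y₁]
  [TopologicalSpace Y₂] [NormedAddCommGroup E] [NormedSpace ℝ E]

theorem exists_forall_norm_sub_comp_lt [CompactSpace X] [T2Space Y] [ParacompactSpace Y]
    (p : C(X, Y)) (φ : C(X, E)) {r : ℝ} (hφ : ∀ x y, p x = p y → ‖φ x - φ y‖ < r) :
    ∃ h : C(Y, E), ∀ x, ‖φ x - h (p x)‖ < r := by
  have hlocal (y : Y) : ∃ c, ∀ᶠ y' in 𝓝 y, c ∈ ⋂ x ∈ p ⁻¹' {y'}, Metric.ball (φ x) r := by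
    obtain ⟨c, hc⟩ : ∃ c, ∀ x, p x = y → c ∈ Metric.ball (φ x) r := by
      by_cases hy : ∃ z, p z = y
      · obtain ⟨z, rfl⟩ := hy
        exact ⟨φ z, fun x hx ↦ mem_ball_iff_norm.mpr (hφ z x hx.symm)⟩
      · exact ⟨0, fun x hx ↦ (hy ⟨x, hx⟩).elim⟩
    have hU : IsOpen {x | c ∈ Metric.ball (φ x) r} :=
      isOpen_lt (continuous_const.dist φ.continuous) continuous_const
    refine ⟨c, ?_⟩
    simp only [mem_iInter₂]
    exact p.continuous.isClosedMap.eventually_nhds_fiber y fun x hx ↦ hU.mem_nhds (hc x hx)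
  obtain ⟨h, hh⟩ := exists_continuous_forall_mem_convex_of_local_const
    (fun y ↦ convex_iInter₂ fun x _ ↦ convex_ball (φ x) r) hlocal
  refine ⟨h, fun x ↦ ?_⟩
  rw [← dist_eq_norm, dist_comm]
  exact mem_iInter₂.mp (hh (p x)) x rfl

/-- The operator `(u₁, u₂) ↦ u₁ ∘ p₁ + u₂ ∘ p₂`. For the projections of a compact set along two
directions, its range is the space `R_c` of that set. -/
noncomputable def compSum (p₁ : C(X, Y₁)) (p₂ : C(X, Y₂)) :
    C(Y₁, E) × C(Y₂, E) →L[ℝ] C(X, E) where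
  toFun u := u.1.comp p₁ + u.2.comp p₂
  map_add' u v := by
    ext x
    exact add_add_add_comm _ _ _ _
  map_smul' c u := by
    ext x
    exact (smul_add c _ _).symm
  cont := ((ContinuousMap.continuous_precomp p₁).comp continuous_fst).add
    ((ContinuousMap.continuous_precomp p₂).comp continuous_snd)

@[simp]
theorem compSum_apply (p₁ : C(X, Y₁)) (p₂ : C(X, Y₂)) (u : C(Y₁, E) × C(Y₂, E)) (x : X) :
    compSum p₁ p₂ u x = u.1 (p₁ x) + u.2 (p₂ x) :=
  rfl

variable [CompactSpace Y₁] [CompactSpace Y₂]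

theorem norm_sub_le_of_compSum_eq (p₁ : C(X, Y₁)) (p₂ : C(X, Y₂)) {g : C(Y₁, E)}
    {h : C(Y₂, E)} {u : C(Y₁, E) × C(Y₂, E)} (hu : compSum p₁ p₂ u = compSum p₁ p₂ (g, -h))
    {x y : X} (hxy : (Setoid.ker p₁ ⊔ Setoid.ker p₂) x y) :
    ‖g (p₁ x) - g (p₁ y)‖ ≤ 2 * ‖u‖ := by
  let F (z : X) : E := g (p₁ z) - u.1 (p₁ z)
  have hF₂ (z : X) : F z = h (p₂ z) + u.2 (p₂ z) := by
    have huz : u.1 (p₁ z) + u.2 (p₂ z) = g (p₁ z) + -h (p₂ z) := DFunLike.congr_fun hu z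
    rw [sub_eq_iff_eq_add, add_assoc, add_comm (u.2 _), huz]
    abel
  have hker₁ : Setoid.ker p₁ ≤ Setoid.ker F := fun {z w} hzw ↦ by
    simp only [Setoid.ker_def] at hzw
    simp only [Setoid.ker_def, F, hzw]
  have hker₂ : Setoid.ker p₂ ≤ Setoid.ker F := fun {z w} hzw ↦ by
    simp only [Setoid.ker_def] at hzw
    simp only [Setoid.ker_def, hF₂, hzw]
  have hF : F x = F y := sup_le hker₁ hker₂ hxy
  calc ‖g (p₁ x) - g (p₁ y)‖ = ‖u.1 (p₁ x) - u.1 (p₁ y)‖ := by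
        rw [sub_eq_sub_iff_sub_eq_sub.mp hF]
    _ ≤ ‖u.1‖ + ‖u.1‖ := norm_sub_le_of_le (u.1.norm_coe_le_norm _) (u.1.norm_coe_le_norm _)
    _ ≤ 2 * ‖u‖ := by linarith [norm_fst_le u]

theorem orbit_variation_bound_of_proximinal_general [CompactSpace X] [CompleteSpace E] [T2Space Y₂]
    (p₁ : C(X, Y₁)) (p₂ : C(X, Y₂))
    (hclosed : IsClosed (range (compSum p₁ p₂ : C(Y₁, E) × C(Y₂, E) →L[ℝ] C(X, E)))) :
    ∃ c : ℝ, 0 < c ∧ ∀ (g : C(Y₁, E)) (D : ℝ),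
      (∀ x y, p₂ x = p₂ y → ‖g (p₁ x) - g (p₁ y)‖ ≤ D) →
      ∀ x y, (Setoid.ker p₁ ⊔ Setoid.ker p₂) x y → ‖g (p₁ x) - g (p₁ y)‖ ≤ c * D := by
  obtain ⟨C, hC, hpre⟩ := exists_preimage_norm_le_of_isClosed_range _ hclosed
  refine ⟨2 * C, by positivity, fun g D hD x y hxy ↦ ?_⟩
  rw [← div_le_iff₀' (by positivity)]
  refine le_of_forall_gt_imp_ge_of_dense fun r hr ↦ ?_
  rw [div_le_iff₀' (by positivity)]
  obtain ⟨h, hh⟩ := exists_forall_norm_sub_comp_lt p₂ (g.comp p₁)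
    fun z w hzw ↦ (hD z w hzw).trans_lt hr
  obtain ⟨u, hu, hu_norm⟩ := hpre (compSum p₁ p₂ (g, -h)) (mem_range_self _)
  have hr₀ : 0 ≤ r := (norm_nonneg _).trans (hh x).le
  have hnorm : ‖compSum p₁ p₂ (g, -h)‖ ≤ r := (ContinuousMap.norm_le _ hr₀).mpr fun z ↦ by
    simpa [← sub_eq_add_neg] using (hh z).le
  calc ‖g (p₁ x) - g (p₁ y)‖ ≤ 2 * ‖u‖ := norm_sub_le_of_compSum_eq p₁ p₂ hu hxy
    _ ≤ 2 * (C * r) := by gcongr; exact hu_norm.trans (by gcongr)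
    _ = 2 * C * r := by ring

end Fibres

section RidgeProj

variable {n : ℕ}

/-- The projection `x ↦ a ⬝ᵥ x` of `X` onto its image. Corestricting to the image keeps the target
compact, so that continuous functions on it form a Banach space. -/
def ridgeProj (a : Fin n → ℝ) (X : Set (Fin n → ℝ)) : C(X, range fun x : X ↦ a ⬝ᵥ x.1) where
  toFun := rangeFactorization fun x : X ↦ a ⬝ᵥ x.1
  continuous_toFun := (continuous_const.dotProduct continuous_subtype_val).rangeFactorization

theorem ridgeProj_eq_iff {a : Fin n → ℝ} {X : Set (Fin n → ℝ)} {x y : X} :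
    ridgeProj a X x = ridgeProj a X y ↔ a ⬝ᵥ x.1 = a ⬝ᵥ y.1 :=
  Subtype.ext_iff

instance compactSpace_range_dotProduct (a : Fin n → ℝ) (X : Set (Fin n → ℝ)) [CompactSpace X] :
    CompactSpace (range fun x : X ↦ a ⬝ᵥ x.1) :=
  isCompact_iff_compactSpace.mp
    (isCompact_range (continuous_const.dotProduct continuous_subtype_val))

variable {a a1 a2 : Fin n → ℝ} {X : Set (Fin n → ℝ)}

theorem exists_continuousMap_comp_ridgeProj_eq [CompactSpace X] {g : ℝ → ℝ}
    (hg : ContinuousOn (fun x ↦ g (a ⬝ᵥ x)) X) :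
    ∃ u : C(range fun x : X ↦ a ⬝ᵥ x.1, ℝ), ∀ x : X, u (ridgeProj a X x) = g (a ⬝ᵥ x.1) := by
  have hquot : IsQuotientMap (ridgeProj a X) :=
    .of_surjective_continuous rangeFactorization_surjective (ridgeProj a X).continuous
  exact ⟨⟨fun y ↦ g y, hquot.continuous_iff.mpr hg.domRestrict⟩, fun _ ↦ rfl⟩

theorem exists_forall_comp_dotProduct_eq (u : C(range fun x : X ↦ a ⬝ᵥ x.1, ℝ)) :
    ∃ g : ℝ → ℝ, ∀ x : X, g (a ⬝ᵥ x.1) = u (ridgeProj a X x) :=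
  ⟨Function.extend Subtype.val u 0, fun x ↦
    Subtype.val_injective.extend_apply u 0 (ridgeProj a X x)⟩

variable [CompactSpace X] {f g : (Fin n → ℝ) → ℝ} {φ ψ : C(X, ℝ)}

theorem mem_rcSet_iff : f ∈ RcSet a1 a2 X ↔
    ∃ u, ∀ x : X, f x = compSum (E := ℝ) (ridgeProj a1 X) (ridgeProj a2 X) u x := by
  constructor
  · rintro ⟨g₁, g₂, hf, hg₁, hg₂⟩
    obtain ⟨u₁, hu₁⟩ := exists_continuousMap_comp_ridgeProj_eq hg₁
    obtain ⟨u₂, hu₂⟩ := exists_continuousMap_comp_ridgeProj_eq hg₂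
    exact ⟨(u₁, u₂), fun x ↦ by rw [hf x x.2, compSum_apply, hu₁, hu₂]⟩
  · rintro ⟨⟨u₁, u₂⟩, hf⟩
    obtain ⟨g₁, hg₁⟩ := exists_forall_comp_dotProduct_eq u₁
    obtain ⟨g₂, hg₂⟩ := exists_forall_comp_dotProduct_eq u₂
    refine ⟨g₁, g₂, fun x hx ↦ by rw [hf ⟨x, hx⟩, compSum_apply, ← hg₁, ← hg₂], ?_, ?_⟩
    · exact continuousOn_iff_continuous_domRestrict.mpr
        ((u₁.comp (ridgeProj a1 X)).continuous.congr fun x ↦ (hg₁ x).symm)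
    · exact continuousOn_iff_continuous_domRestrict.mpr
        ((u₂.comp (ridgeProj a2 X)).continuous.congr fun x ↦ (hg₂ x).symm)

theorem supDist_eq_dist (hf : ∀ x : X, f x = φ x) (hg : ∀ x : X, g x = ψ x) :
    supDist X f g = dist φ ψ := by
  have hle : ∀ r ∈ {r | ∃ x ∈ X, r = |f x - g x|}, r ≤ dist φ ψ := by
    rintro _ ⟨x, hx, rfl⟩
    rw [hf ⟨x, hx⟩, hg ⟨x, hx⟩, ← Real.dist_eq]
    exact ContinuousMap.dist_apply_le_dist _
  refine le_antisymm (Real.sSup_le hle dist_nonneg) ?_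
  refine (ContinuousMap.dist_le (Real.sSup_nonneg ?_)).mpr fun x ↦ ?_
  · rintro _ ⟨x, _, rfl⟩
    exact abs_nonneg _
  · rw [Real.dist_eq, ← hf, ← hg]
    exact le_csSup ⟨_, hle⟩ ⟨x, x.2, rfl⟩

theorem image_supDist_rcSet (hf : ∀ x : X, f x = φ x) :
    supDist X f '' RcSet a1 a2 X =
      dist φ '' range (compSum (ridgeProj a1 X) (ridgeProj a2 X)) := by
  apply Subset.antisymm
  · rintro _ ⟨g, hg, rfl⟩
    obtain ⟨u, hu⟩ := mem_rcSet_iff.mp hg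
    exact ⟨_, mem_range_self u, (supDist_eq_dist hf hu).symm⟩
  · rintro _ ⟨_, ⟨u, rfl⟩, rfl⟩
    let g := Function.extend Subtype.val (compSum (ridgeProj a1 X) (ridgeProj a2 X) u) 0
    have hg (x : X) : g x = compSum (ridgeProj a1 X) (ridgeProj a2 X) u x :=
      Subtype.val_injective.extend_apply _ _ x
    exact ⟨g, mem_rcSet_iff.mpr ⟨u, hg⟩, supDist_eq_dist hf hg⟩

theorem isClosed_range_compSum_ridgeProj
    (hprox : ∀ f : (Fin n → ℝ) → ℝ, ContinuousOn f X → HasExtremalIn X f (RcSet a1 a2 X)) :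
    IsClosed (range (compSum (E := ℝ) (ridgeProj a1 X) (ridgeProj a2 X))) := by
  refine isClosed_of_forall_exists_dist_eq_infDist fun φ ↦ ?_
  let f := Function.extend Subtype.val φ 0
  have hf (x : X) : f x = φ x := Subtype.val_injective.extend_apply _ _ x
  have hf_cont : ContinuousOn f X :=
    continuousOn_iff_continuous_domRestrict.mpr (φ.continuous.congr fun x ↦ (hf x).symm)
  obtain ⟨g, hg, hfg⟩ := hprox f hf_cont
  obtain ⟨u, hu⟩ := mem_rcSet_iff.mp hg
  refine ⟨_, mem_range_self u, ?_⟩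
  rw [← supDist_eq_dist hf hu, hfg, image_supDist_rcSet hf, Metric.infDist_eq_iInf, sInf_image']

end RidgeProj

section Orbit

variable {n : ℕ} {a1 a2 : Fin n → ℝ} {X : Set (Fin n → ℝ)}

theorem IsPathFrom.ker_sup_ker_rel {m : ℕ} {p : ℕ → Fin n → ℝ} (hp : IsPathFrom a1 a2 m p)
    (hpX : ∀ i < m, p i ∈ X) {i j : ℕ} (hi : i < m) (hj : j < m) :
    (Setoid.ker (ridgeProj a1 X) ⊔ Setoid.ker (ridgeProj a2 X))
      ⟨p i, hpX i hi⟩ ⟨p j, hpX j hj⟩ := by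
  set r := Setoid.ker (ridgeProj a1 X) ⊔ Setoid.ker (ridgeProj a2 X)
  have hstep (k : ℕ) (hk : k + 1 < m) :
      r ⟨p k, hpX k (by omega)⟩ ⟨p (k + 1), hpX (k + 1) hk⟩ := by
    obtain ⟨-, h_even, h_odd⟩ := hp k hk
    simp only [dotProduct_sub, sub_eq_zero] at h_even h_odd
    rcases Nat.mod_two_eq_zero_or_one k with hk₂ | hk₂
    · exact le_sup_left (a := Setoid.ker (ridgeProj a1 X))
        (ridgeProj_eq_iff.mpr (h_even hk₂).symm)
    · exact le_sup_right (a := Setoid.ker (ridgeProj a1 X))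
        (ridgeProj_eq_iff.mpr (h_odd hk₂).symm)
  have hzero (k : ℕ) (hk : k < m) : r ⟨p 0, hpX 0 (by omega)⟩ ⟨p k, hpX k hk⟩ := by
    induction k with
    | zero => exact r.refl _
    | succ k ih => exact r.trans (ih (by omega)) (hstep k hk)
  exact r.trans (r.symm (hzero i hi)) (hzero j hj)

theorem orbit_subset (t : Fin n → ℝ) : Orbit a1 a2 X t ⊆ X := by
  rintro _ ⟨m, p, ⟨-, -, hpX⟩, -, j, hj, rfl⟩
  exact hpX j hj

theorem ker_sup_ker_rel_of_mem_orbit {t x : X} (hx : x.1 ∈ Orbit a1 a2 X t) :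
    (Setoid.ker (ridgeProj a1 X) ⊔ Setoid.ker (ridgeProj a2 X)) t x := by
  obtain ⟨t, ht⟩ := t
  obtain ⟨x, hxX⟩ := x
  obtain ⟨m, p, ⟨-, hp | hp, hpX⟩, ⟨i, hi, rfl⟩, j, hj, rfl⟩ := hx
  · exact hp.ker_sup_ker_rel hpX hi hj
  · rw [sup_comm]
    exact hp.ker_sup_ker_rel hpX hi hj

end Orbit

section Variation

variable {n : ℕ} {a1 a2 : Fin n → ℝ} {X : Set (Fin n → ℝ)} {f : (Fin n → ℝ) → ℝ}

theorem varOn_le {Y : Set (Fin n → ℝ)} {B : ℝ} (hB : 0 ≤ B)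
    (h : ∀ x ∈ Y, ∀ y ∈ Y, |f x - f y| ≤ B) : varOn f Y ≤ B :=
  Real.sSup_le (by rintro _ ⟨x, hx, y, hy, rfl⟩; exact h x hx y hy) hB

theorem varOn_nonneg (f : (Fin n → ℝ) → ℝ) (Y : Set (Fin n → ℝ)) : 0 ≤ varOn f Y :=
  Real.sSup_nonneg (by rintro _ ⟨x, -, y, -, rfl⟩; exact abs_nonneg _)

theorem BddOn.exists_abs_sub_le (hf : BddOn f X) :
    ∃ B, 0 ≤ B ∧ ∀ x ∈ X, ∀ y ∈ X, |f x - f y| ≤ B := by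
  obtain ⟨M, hM⟩ := hf
  refine ⟨|M| + |M|, by positivity, fun x hx y hy ↦ (abs_sub _ _).trans ?_⟩
  exact add_le_add ((hM x hx).trans (le_abs_self M)) ((hM y hy).trans (le_abs_self M))

theorem BddOn.abs_sub_le_sSup_varOn (hf : BddOn f X) {Y : (Fin n → ℝ) → Set (Fin n → ℝ)}
    (hY : ∀ t, Y t ⊆ X) {t x y : Fin n → ℝ} (ht : t ∈ X) (hx : x ∈ Y t) (hy : y ∈ Y t) :
    |f x - f y| ≤ sSup {r | ∃ t ∈ X, r = varOn f (Y t)} := by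
  obtain ⟨B, hB₀, hB⟩ := hf.exists_abs_sub_le
  have hYB (t x) (hx : x ∈ Y t) (y) (hy : y ∈ Y t) : |f x - f y| ≤ B :=
    hB x (hY t hx) y (hY t hy)
  calc |f x - f y| ≤ varOn f (Y t) :=
        le_csSup ⟨B, by rintro _ ⟨x, hx, y, hy, rfl⟩; exact hYB t x hx y hy⟩ ⟨x, hx, y, hy, rfl⟩
    _ ≤ sSup {r | ∃ t ∈ X, r = varOn f (Y t)} :=
        le_csSup ⟨B, by rintro _ ⟨t, -, rfl⟩; exact varOn_le hB₀ (hYB t)⟩ ⟨t, ht, rfl⟩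

theorem BddOn.sSup_varOn_orbit_le (hf : BddOn f X) {c : ℝ} (hc : 0 ≤ c)
    (h : ∀ D, (∀ x y : X, ridgeProj a2 X x = ridgeProj a2 X y → |f x - f y| ≤ D) →
      ∀ x y : X, (Setoid.ker (ridgeProj a1 X) ⊔ Setoid.ker (ridgeProj a2 X)) x y →
        |f x - f y| ≤ c * D) :
    sSup {r | ∃ t ∈ X, r = varOn f (Orbit a1 a2 X t)} ≤
      c * sSup {r | ∃ t ∈ X, r = varOn f {x ∈ X | a2 ⬝ᵥ x = a2 ⬝ᵥ t}} := by
  set D := sSup {r | ∃ t ∈ X, r = varOn f {x ∈ X | a2 ⬝ᵥ x = a2 ⬝ᵥ t}}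
  have hD₀ : 0 ≤ D := Real.sSup_nonneg (by rintro _ ⟨t, -, rfl⟩; exact varOn_nonneg f _)
  have hfibre (x y : X) (hxy : ridgeProj a2 X x = ridgeProj a2 X y) : |f x - f y| ≤ D :=
    hf.abs_sub_le_sSup_varOn (fun _ ↦ sep_subset _ _) y.2 ⟨x.2, ridgeProj_eq_iff.mp hxy⟩ ⟨y.2, rfl⟩
  refine Real.sSup_le ?_ (by positivity)
  rintro _ ⟨t, ht, rfl⟩
  refine varOn_le (by positivity) fun x hx y hy ↦ ?_
  have htx := ker_sup_ker_rel_of_mem_orbit (t := ⟨t, ht⟩) (x := ⟨x, orbit_subset t hx⟩) hx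
  have hty := ker_sup_ker_rel_of_mem_orbit (t := ⟨t, ht⟩) (x := ⟨y, orbit_subset t hy⟩) hy
  exact h D hfibre _ _ (Setoid.trans' _ (Setoid.symm' _ htx) hty)

end Variation

/-- Theorem 2.2: if `R_c(X)` is proximinal in `C(X)`, then there is
`c > 0` such that `sup_{t∈X} var_{O(t)} f ≤ c · sup_{t∈X} var_{π₂⁻¹(π₂(t))} f` for every
continuous function `f` on `X` of the form `f(x) = g(a¹·x)`. -/
theorem orbit_variation_bound_of_proximinal
    {n : ℕ} (a1 a2 : Fin n → ℝ) (hindep : LinearIndependent ℝ ![a1, a2])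
    (X : Set (Fin n → ℝ)) (hX : IsCompact X)
    (hprox : ∀ f : (Fin n → ℝ) → ℝ, ContinuousOn f X →
      HasExtremalIn X f (RcSet a1 a2 X)) :
    ∃ c : ℝ, 0 < c ∧
      ∀ (g : ℝ → ℝ) (f : (Fin n → ℝ) → ℝ),
        (∀ x ∈ X, f x = g (a1 ⬝ᵥ x)) → ContinuousOn f X →
        sSup {r | ∃ t ∈ X, r = varOn f (Orbit a1 a2 X t)} ≤
          c * sSup {r | ∃ t ∈ X, r = varOn f {x ∈ X | a2 ⬝ᵥ x = a2 ⬝ᵥ t}} := by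
  have : CompactSpace X := isCompact_iff_compactSpace.mp hX
  obtain ⟨c, hc, hbound⟩ := orbit_variation_bound_of_proximinal_general _ _
    (isClosed_range_compSum_ridgeProj hprox)
  refine ⟨c, hc, fun g f hfg hf ↦ ?_⟩
  obtain ⟨v, hv⟩ := exists_continuousMap_comp_ridgeProj_eq (hf.congr fun x hx ↦ (hfg x hx).symm)
  have hvf (x : X) : v (ridgeProj a1 X x) = f x := (hv x).trans (hfg x x.2).symm
  refine BddOn.sSup_varOn_orbit_le (hX.exists_bound_of_continuousOn hf) hc.le ?_
  simpa only [hvf, Real.norm_eq_abs] using hbound v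
end

section
/- Let I = [0,1]² be the unit square, a¹ = (1, 1) and a² = (1, 1/2). For every integer k ≥ 1, the ordered set l_k = ((1,0), (0,1), (1/2,0), (0,1/2), (1/4,0), (0,1/4), ..., (2^{−k},0), (0,2^{−k})) is an irreducible path in I with respect to a¹ and a², and its length is 2k + 2. -/
open Matrix Set Filter Topology

/-- The points of the path `l_k`:
`(1,0), (0,1), (1/2,0), (0,1/2), (1/4,0), (0,1/4), …`, i.e. the `2i`-th point is
`(2^{−i}, 0)` and the `(2i+1)`-st point is `(0, 2^{−i})`. -/
noncomputable def lkSeq : ℕ → (Fin 2 → ℝ) := fun i =>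
  if i % 2 = 0 then ![(1 / 2 : ℝ) ^ (i / 2), 0] else ![0, (1 / 2 : ℝ) ^ (i / 2)]

/-!
On the nonnegative quadrant the functionals `f x = a¹ ⬝ᵥ x` and `g x = a² ⬝ᵥ x` satisfy
`r * f ≤ g ≤ f`, with `r = 1 / 2`. A step perpendicular to `a²` preserves `g`, and a step
perpendicular to `a¹` preserves `f`, hence shrinks `g` at most by the factor `r`. Along `l_k` the
value of `g` falls from `1` to `r ^ (k + 1)`, so every path joining its endpoints has at least
`k + 1` steps perpendicular to `a¹`; as the two kinds of step alternate, it has at least `2 * k + 2`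
points.
-/

section Decay

variable {n : ℕ} {a1 a2 : Fin n → ℝ} {X : Set (Fin n → ℝ)} {p : ℕ → Fin n → ℝ} {m : ℕ} {r : ℝ}

lemma IsPathFrom.tail (hp : IsPathFrom a1 a2 (m + 1) p) :
    IsPathFrom a2 a1 m fun i => p (i + 1) := by
  intro i hi
  obtain ⟨hne, heven, hodd⟩ := hp (i + 1) (by lia)
  exact ⟨hne, fun h => hodd (by lia), fun h => heven (by lia)⟩

lemma IsPathFrom.dotProduct_succ_of_even (hp : IsPathFrom a1 a2 m p) {i : ℕ} (hi : i + 1 < m)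
    (heven : i % 2 = 0) : a1 ⬝ᵥ p (i + 1) = a1 ⬝ᵥ p i := by
  rw [← sub_eq_zero, ← dotProduct_sub]
  exact (hp i hi).2.1 heven

lemma IsPathFrom.dotProduct_succ_of_odd (hp : IsPathFrom a1 a2 m p) {i : ℕ} (hi : i + 1 < m)
    (hodd : i % 2 = 1) : a2 ⬝ᵥ p (i + 1) = a2 ⬝ᵥ p i := by
  rw [← sub_eq_zero, ← dotProduct_sub]
  exact (hp i hi).2.2 hodd

/-- The number of steps perpendicular to `a1` among the first `i` steps is `(i + 1) / 2`. -/
lemma IsPathFrom.pow_mul_dotProduct_le (hp : IsPathFrom a1 a2 m p) (hX : ∀ i < m, p i ∈ X)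
    (hr : 0 ≤ r) (hlower : ∀ x ∈ X, r * (a1 ⬝ᵥ x) ≤ a2 ⬝ᵥ x)
    (hupper : ∀ x ∈ X, a2 ⬝ᵥ x ≤ a1 ⬝ᵥ x) {i : ℕ} (hi : i < m) :
    r ^ ((i + 1) / 2) * (a2 ⬝ᵥ p 0) ≤ a2 ⬝ᵥ p i := by
  induction i with
  | zero => simp
  | succ i ih =>
    have hprev := ih (by lia)
    rcases Nat.mod_two_eq_zero_or_one i with heven | hodd
    · calc r ^ ((i + 1 + 1) / 2) * (a2 ⬝ᵥ p 0)
          = r * (r ^ ((i + 1) / 2) * (a2 ⬝ᵥ p 0)) := by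
            rw [show (i + 1 + 1) / 2 = (i + 1) / 2 + 1 by lia, pow_succ']
            ring
        _ ≤ r * (a1 ⬝ᵥ p i) := by
            gcongr
            exact hprev.trans (hupper _ (hX i (by lia)))
        _ = r * (a1 ⬝ᵥ p (i + 1)) := by rw [hp.dotProduct_succ_of_even hi heven]
        _ ≤ a2 ⬝ᵥ p (i + 1) := hlower _ (hX _ hi)
    · rwa [hp.dotProduct_succ_of_odd hi hodd, show (i + 1 + 1) / 2 = (i + 1) / 2 by lia]

lemma IsPathIn.pow_mul_dotProduct_le (hp : IsPathIn a1 a2 X m p) (hr₀ : 0 ≤ r) (hr₁ : r ≤ 1)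
    (hlower : ∀ x ∈ X, r * (a1 ⬝ᵥ x) ≤ a2 ⬝ᵥ x) (hupper : ∀ x ∈ X, a2 ⬝ᵥ x ≤ a1 ⬝ᵥ x)
    (hstart : 0 ≤ a2 ⬝ᵥ p 0) :
    r ^ (m / 2) * (a2 ⬝ᵥ p 0) ≤ a2 ⬝ᵥ p (m - 1) := by
  obtain ⟨hm, hp | hp, hX⟩ := hp
  · simpa only [Nat.sub_add_cancel hm] using
      hp.pow_mul_dotProduct_le hX hr₀ hlower hupper (i := m - 1) (by lia)
  · obtain rfl | ⟨l, rfl⟩ : m = 1 ∨ ∃ l, m = l + 2 := by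
      obtain ⟨l, rfl⟩ := Nat.exists_eq_add_of_le' hm
      cases l <;> simp
    · simp
    · calc r ^ ((l + 2) / 2) * (a2 ⬝ᵥ p 0)
          ≤ r ^ ((l + 1) / 2) * (a2 ⬝ᵥ p 0) := by
            gcongr ?_ * _
            exact pow_le_pow_of_le_one hr₀ hr₁ (by lia)
        _ = r ^ ((l + 1) / 2) * (a2 ⬝ᵥ p 1) := by
            rw [hp.dotProduct_succ_of_even (by lia) rfl]
        _ ≤ a2 ⬝ᵥ p (l + 1) := hp.tail.pow_mul_dotProduct_le
            (fun i hi => hX (i + 1) (by lia)) hr₀ hlower hupper (by lia)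

lemma IsPathIn.isIrreduciblePathIn_of_dotProduct_lt (hp : IsPathIn a1 a2 X m p) (hr₀ : 0 ≤ r)
    (hr₁ : r ≤ 1) (hlower : ∀ x ∈ X, r * (a1 ⬝ᵥ x) ≤ a2 ⬝ᵥ x)
    (hupper : ∀ x ∈ X, a2 ⬝ᵥ x ≤ a1 ⬝ᵥ x) (hstart : 0 ≤ a2 ⬝ᵥ p 0)
    (hend : a2 ⬝ᵥ p (m - 1) < r ^ ((m - 1) / 2) * (a2 ⬝ᵥ p 0)) :
    IsIrreduciblePathIn a1 a2 X m p := by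
  refine ⟨hp, ?_⟩
  rintro ⟨l, q, hlm, hq, hq₀, hq₁⟩
  have hdecay : r ^ (l / 2) * (a2 ⬝ᵥ p 0) ≤ a2 ⬝ᵥ p (m - 1) := by
    rw [← hq₀, ← hq₁]
    exact hq.pow_mul_dotProduct_le hr₀ hr₁ hlower hupper (hq₀ ▸ hstart)
  have hpow : r ^ ((m - 1) / 2) ≤ r ^ (l / 2) := pow_le_pow_of_le_one hr₀ hr₁ (by lia)
  exact (hend.trans_le (mul_le_mul_of_nonneg_right hpow hstart)).not_ge hdecay

end Decay

section Zigzag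

variable {r : ℝ}

/-- The zigzag `(1, 0), (0, 1), (r, 0), (0, r), (r², 0), (0, r²), …` between the coordinate axes,
which follows the pattern of `lkSeq` with an arbitrary ratio `r` in place of `1 / 2`. -/
noncomputable def zigzag (r : ℝ) (i : ℕ) : Fin 2 → ℝ :=
  if i % 2 = 0 then ![r ^ (i / 2), 0] else ![0, r ^ (i / 2)]

lemma lkSeq_eq_zigzag : lkSeq = zigzag (1 / 2) := rfl

lemma zigzag_two_mul (r : ℝ) (j : ℕ) : zigzag r (2 * j) = ![r ^ j, 0] := by
  simp [zigzag]

lemma zigzag_two_mul_add_one (r : ℝ) (j : ℕ) : zigzag r (2 * j + 1) = ![0, r ^ j] := by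
  rw [zigzag, if_neg (by lia), show (2 * j + 1) / 2 = j by lia]

lemma isPathFrom_zigzag (hr : r ≠ 0) (m : ℕ) :
    IsPathFrom ![1, 1] ![1, r] m (zigzag r) := by
  intro i _
  obtain ⟨j, rfl | rfl⟩ := i.even_or_odd'
  · rw [zigzag_two_mul, zigzag_two_mul_add_one]
    refine ⟨fun h => ?_, fun _ => by simp [dotProduct], by lia⟩
    simpa [hr] using congrFun h 1
  · rw [show 2 * j + 1 + 1 = 2 * (j + 1) by lia, zigzag_two_mul, zigzag_two_mul_add_one]
    refine ⟨fun h => ?_, by lia, fun _ => by simp [dotProduct, pow_succ']⟩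
    simpa [hr] using congrFun h 1

lemma zigzag_mem_Icc (hr₀ : 0 ≤ r) (hr₁ : r ≤ 1) (i : ℕ) : zigzag r i ∈ Icc 0 1 := by
  have hpow : 0 ≤ r ^ (i / 2) ∧ r ^ (i / 2) ≤ 1 := ⟨pow_nonneg hr₀ _, pow_le_one₀ hr₀ hr₁⟩
  unfold zigzag
  split_ifs <;> simp [Pi.le_def, Fin.forall_fin_two, hpow]

theorem lk_is_irreducible_path_general (hr₀ : 0 < r) (hr₁ : r < 1) (k : ℕ)
    {X : Set (Fin 2 → ℝ)} (hX : X ⊆ Ici 0) (hmem : ∀ i < 2 * k + 2, zigzag r i ∈ X) :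
    IsIrreduciblePathIn ![1, 1] ![1, r] X (2 * k + 2) (zigzag r) := by
  have hpath : IsPathIn ![1, 1] ![1, r] X (2 * k + 2) (zigzag r) :=
    ⟨by lia, Or.inl (isPathFrom_zigzag hr₀.ne' _), hmem⟩
  have hstart : ![1, r] ⬝ᵥ zigzag r 0 = 1 := by simp [zigzag, dotProduct]
  have hend : ![1, r] ⬝ᵥ zigzag r (2 * k + 1) = r * r ^ k := by
    simp [zigzag_two_mul_add_one, dotProduct]
  refine hpath.isIrreduciblePathIn_of_dotProduct_lt hr₀.le hr₁.le (fun x hx => ?_)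
    (fun x hx => ?_) (by simp [hstart]) ?_
  · have hx₀ : 0 ≤ x 0 := hX hx 0
    simp only [dotProduct, Fin.sum_univ_two, cons_val_zero, cons_val_one]
    nlinarith
  · have hx₁ : 0 ≤ x 1 := hX hx 1
    simp only [dotProduct, Fin.sum_univ_two, cons_val_zero, cons_val_one]
    nlinarith
  · rw [show 2 * k + 2 - 1 = 2 * k + 1 by lia, show (2 * k + 1) / 2 = k by lia, hstart, hend,
      mul_one]
    exact mul_lt_of_lt_one_left (pow_pos hr₀ k) hr₁

end Zigzag

/-- in the unit square `I = [0,1]²`, with `a¹ = (1,1)` and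
`a² = (1,1/2)`, for every `k ≥ 1` the ordered set
`l_k = ((1,0), (0,1), (1/2,0), (0,1/2), …, (2^{−k},0), (0,2^{−k}))`
is an irreducible path in `I` of length `2k + 2`. -/
theorem lk_is_irreducible_path (k : ℕ) (hk : 1 ≤ k) :
    IsIrreduciblePathIn ![(1 : ℝ), 1] ![(1 : ℝ), 1 / 2]
      (Set.Icc (0 : Fin 2 → ℝ) 1) (2 * k + 2) lkSeq := by
  rw [lkSeq_eq_zigzag]
  exact lk_is_irreducible_path_general (by norm_num) (by norm_num) k (fun _ hx => hx.1)
    fun i _ => zigzag_mem_Icc (by norm_num) (by norm_num) i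
end
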